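/- arXiv:2308.11616 — 2 statements merged into one kernel-verified Lean document; each statement's English description precedes it below -/
import Mathlib

section
/- For every unit vector ψ ∈ ℂ^{2ⁿ}, the Shannon entropy of the distribution Ξ_ψ satisfies H(Ξ_ψ) ≥ n·log 2; equivalently, the stabilizer Rényi entropy M(ψ) = H(Ξ_ψ) − n·log 2 is nonnegative. -/
/-!
Write `c_P = ⟨ψ, P ψ⟩`; it is real since `P` is Hermitian. Two facts about `Ξ_ψ(P) = c_P² / 2ⁿ` suffice:

* `∑_P Ξ_ψ(P) = 1`, which follows from the completeness relation
  `∑_P P x y * P z w = 2ⁿ δ_{x w} δ_{y z}` (`sum_pauliString`), the `n`-fold product of the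
  single-qubit relation `sum_pauliMat`;
* `Ξ_ψ(P) ≤ 2⁻ⁿ`, because `P` is unitary and so `|c_P| ≤ 1` (`xi_le`).

Hence `-log Ξ_ψ(P) ≥ n log 2` wherever `Ξ_ψ(P) > 0`, and averaging over `Ξ_ψ` gives the bound.
-/

open Matrix

/-- The single-qubit Pauli matrices `I, X, Y, Z`. -/
def pauliMat : Fin 4 → Matrix (Fin 2) (Fin 2) ℂ
  | 0 => !![1, 0; 0, 1]
  | 1 => !![0, 1; 1, 0]
  | 2 => !![0, -Complex.I; Complex.I, 0]
  | 3 => !![1, 0; 0, -1]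

/-- The unphased `n`-qubit Pauli string `σ_{a 1} ⊗ ⋯ ⊗ σ_{a n}`, realized as a matrix
acting on `ℂ^{2^n}` with index set `Fin n → Fin 2` (the `n`-fold Kronecker product,
written entrywise). -/
def pauliString {n : ℕ} (a : Fin n → Fin 4) :
    Matrix (Fin n → Fin 2) (Fin n → Fin 2) ℂ :=
  fun x y => ∏ i, pauliMat (a i) (x i) (y i)

/-- `Ξ_ψ(P) = ⟨ψ, P ψ⟩² / 2^n` for an unphased Pauli string `P`. -/
noncomputable def xi {n : ℕ} (ψ : (Fin n → Fin 2) → ℂ) (a : Fin n → Fin 4) : ℝ :=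
  (star ψ ⬝ᵥ (pauliString a).mulVec ψ).re ^ 2 / 2 ^ n

/-- The swap identity for one qubit: `∑_P P ⊗ P` is twice the swap operator. -/
lemma sum_pauliMat (x y z w : Fin 2) :
    ∑ a, pauliMat a x y * pauliMat a z w = if x = w ∧ y = z then 2 else 0 := by
  fin_cases x <;> fin_cases y <;> fin_cases z <;> fin_cases w <;>
    simp [Fin.sum_univ_four, pauliMat] <;> norm_num

lemma pauliMat_sq (a : Fin 4) (x z : Fin 2) :
    ∑ y, pauliMat a x y * pauliMat a y z = if x = z then 1 else 0 := by
  fin_cases a <;> fin_cases x <;> fin_cases z <;> simp [pauliMat]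

lemma star_pauliMat (a : Fin 4) (x y : Fin 2) : star (pauliMat a x y) = pauliMat a y x := by
  fin_cases a <;> fin_cases x <;> fin_cases y <;> simp [pauliMat]

lemma sum_pauliString {n : ℕ} (x y z w : Fin n → Fin 2) :
    ∑ a, pauliString a x y * pauliString a z w = if x = w ∧ y = z then 2 ^ n else 0 := by
  have h := Finset.prod_univ_sum (fun _ : Fin n => (Finset.univ : Finset (Fin 4)))
    (fun i a => pauliMat a (x i) (y i) * pauliMat a (z i) (w i))
  rw [Fintype.piFinset_univ] at h
  simp only [pauliString, ← Finset.prod_mul_distrib]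
  rw [← h]
  simp only [sum_pauliMat]
  rw [Finset.prod_ite_zero]
  simp [funext_iff, forall_and]

lemma pauliString_sq {n : ℕ} (a : Fin n → Fin 4) : pauliString a * pauliString a = 1 := by
  ext x z
  have h := Finset.prod_univ_sum (fun _ : Fin n => (Finset.univ : Finset (Fin 2)))
    (fun i y => pauliMat (a i) (x i) y * pauliMat (a i) y (z i))
  rw [Fintype.piFinset_univ] at h
  simp only [Matrix.mul_apply, pauliString, ← Finset.prod_mul_distrib]
  rw [← h]
  simp only [pauliMat_sq]
  rw [Finset.prod_ite_zero]
  simp [funext_iff, Matrix.one_apply]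

lemma pauliString_isHermitian {n : ℕ} (a : Fin n → Fin 4) : (pauliString a).IsHermitian := by
  ext x y
  simp [Matrix.conjTranspose_apply, pauliString, star_prod, ← star_pauliMat (a _) (x _) (y _)]

lemma star_expectation {n : ℕ} (ψ : (Fin n → Fin 2) → ℂ) (a : Fin n → Fin 4) :
    star (star ψ ⬝ᵥ (pauliString a).mulVec ψ) = star ψ ⬝ᵥ (pauliString a).mulVec ψ := by
  rw [← Matrix.star_dotProduct_star, star_star, Matrix.star_mulVec,
    (pauliString_isHermitian a).eq, ← Matrix.dotProduct_mulVec]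

lemma sum_expectation_sq {n : ℕ} (ψ : (Fin n → Fin 2) → ℂ) (hψ : star ψ ⬝ᵥ ψ = 1) :
    ∑ a, (star ψ ⬝ᵥ (pauliString a).mulVec ψ) ^ 2 = 2 ^ n := by
  have h1 (a : Fin n → Fin 4) : (star ψ ⬝ᵥ (pauliString a).mulVec ψ) ^ 2 =
      ∑ x, ∑ y, ∑ z, ∑ w, star (ψ x) * ψ y * star (ψ z) * ψ w *
        (pauliString a x y * pauliString a z w) := by
    have e : star ψ ⬝ᵥ (pauliString a).mulVec ψ =
        ∑ x, ∑ y, star (ψ x) * (pauliString a x y * ψ y) := by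
      simp only [dotProduct, Matrix.mulVec, Finset.mul_sum, Pi.star_apply]
    rw [sq, e]
    simp_rw [Finset.sum_mul, Finset.mul_sum]
    refine Finset.sum_congr rfl fun x _ => Finset.sum_congr rfl fun y _ =>
      Finset.sum_congr rfl fun z _ => Finset.sum_congr rfl fun w _ => ?_
    ring
  simp only [h1]
  have h2 : ∑ a : Fin n → Fin 4, ∑ x, ∑ y, ∑ z, ∑ w, star (ψ x) * ψ y * star (ψ z) * ψ w *
        (pauliString a x y * pauliString a z w) =
      ∑ x, ∑ y, ∑ z, ∑ w, star (ψ x) * ψ y * star (ψ z) * ψ w *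
        ∑ a, (pauliString a x y * pauliString a z w) := by
    rw [Finset.sum_comm]; refine Finset.sum_congr rfl fun x _ => ?_
    rw [Finset.sum_comm]; refine Finset.sum_congr rfl fun y _ => ?_
    rw [Finset.sum_comm]; refine Finset.sum_congr rfl fun z _ => ?_
    rw [Finset.sum_comm]; refine Finset.sum_congr rfl fun w _ => ?_
    rw [Finset.mul_sum]
  rw [h2]
  have h3 : ∑ x, ∑ y, star (ψ x) * ψ x * (star (ψ y) * ψ y) = 1 := by
    simp only [← Finset.mul_sum, ← Finset.sum_mul]
    simp only [dotProduct, Pi.star_apply] at hψ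
    rw [hψ, one_mul]
  simp only [sum_pauliString, ite_and, mul_ite, mul_zero]
  simp only [Finset.sum_ite_eq, Finset.mem_univ, if_true]
  refine Eq.trans ?_ ((congrArg (· * (2 : ℂ) ^ n) h3).trans (one_mul _))
  simp only [Finset.sum_mul]
  refine Finset.sum_congr rfl fun x _ => ?_
  refine Finset.sum_congr rfl fun y _ => ?_
  ring

lemma sum_xi {n : ℕ} (ψ : (Fin n → Fin 2) → ℂ) (hψ : star ψ ⬝ᵥ ψ = 1) : ∑ a, xi ψ a = 1 := by
  have h : ∑ a : Fin n → Fin 4, (star ψ ⬝ᵥ (pauliString a).mulVec ψ).re ^ 2 = 2 ^ n := by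
    have h0 := sum_expectation_sq ψ hψ
    have h1 (a : Fin n → Fin 4) : star ψ ⬝ᵥ (pauliString a).mulVec ψ =
        ((star ψ ⬝ᵥ (pauliString a).mulVec ψ).re : ℂ) :=
      (Complex.conj_eq_iff_re.1 (star_expectation ψ a)).symm
    rw [Finset.sum_congr rfl fun a _ => by rw [h1 a]] at h0
    exact_mod_cast h0
  simp only [xi, ← Finset.sum_div, h]
  exact div_self (by positivity)

/-- Cauchy–Schwarz for unit vectors. -/
lemma re_sq_le_one {ι : Type*} [Fintype ι] (u v : ι → ℂ) (hu : star u ⬝ᵥ u = 1)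
    (hv : star v ⬝ᵥ v = 1) : (star u ⬝ᵥ v).re ^ 2 ≤ 1 := by
  have hu' := congrArg Complex.re hu
  have hv' := congrArg Complex.re hv
  simp only [dotProduct, Complex.re_sum, Pi.star_apply, Complex.mul_re, Complex.star_def,
    Complex.conj_re, Complex.conj_im, Complex.one_re] at hu' hv' ⊢
  rw [sq_le_one_iff_abs_le_one, abs_le]
  constructor
  · have : 0 ≤ ∑ i, (((u i).re + (v i).re) ^ 2 + ((u i).im + (v i).im) ^ 2) :=
      Finset.sum_nonneg fun i _ => by positivity
    have e : ∑ i, (((u i).re + (v i).re) ^ 2 + ((u i).im + (v i).im) ^ 2) =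
        1 + 1 + 2 * ∑ i, ((u i).re * (v i).re - -(u i).im * (v i).im) := by
      nth_rw 1 [← hu', ← hv']
      rw [Finset.mul_sum, ← Finset.sum_add_distrib, ← Finset.sum_add_distrib]
      exact Finset.sum_congr rfl fun i _ => by ring
    linarith
  · have : 0 ≤ ∑ i, (((u i).re - (v i).re) ^ 2 + ((u i).im - (v i).im) ^ 2) :=
      Finset.sum_nonneg fun i _ => by positivity
    have e : ∑ i, (((u i).re - (v i).re) ^ 2 + ((u i).im - (v i).im) ^ 2) =
        1 + 1 - 2 * ∑ i, ((u i).re * (v i).re - -(u i).im * (v i).im) := by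
      nth_rw 1 [← hu', ← hv']
      rw [Finset.mul_sum, ← Finset.sum_add_distrib, ← Finset.sum_sub_distrib]
      exact Finset.sum_congr rfl fun i _ => by ring
    linarith

lemma xi_le {n : ℕ} (ψ : (Fin n → Fin 2) → ℂ) (hψ : star ψ ⬝ᵥ ψ = 1) (a : Fin n → Fin 4) :
    xi ψ a ≤ 1 / 2 ^ n := by
  refine div_le_div_of_nonneg_right (re_sq_le_one _ _ hψ ?_) (by positivity)
  rw [Matrix.star_mulVec, (pauliString_isHermitian a).eq, Matrix.dotProduct_mulVec,
    Matrix.vecMul_vecMul, pauliString_sq, Matrix.vecMul_one, hψ]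

/-- For every unit vector `ψ ∈ ℂ^{2^n}`, the Shannon entropy of the distribution `Ξ_ψ`
satisfies `H(Ξ_ψ) ≥ n log 2`; equivalently, the stabilizer Rényi entropy
`M(ψ) = H(Ξ_ψ) − n log 2` is nonnegative. -/
theorem stmt6 {n : ℕ} (ψ : (Fin n → Fin 2) → ℂ) (hψ : star ψ ⬝ᵥ ψ = 1) :
    (n : ℝ) * Real.log 2 ≤ -∑ a : Fin n → Fin 4, xi ψ a * Real.log (xi ψ a) := by
  rw [← one_mul ((n : ℝ) * Real.log 2), ← sum_xi ψ hψ, Finset.sum_mul, ← Finset.sum_neg_distrib]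
  refine Finset.sum_le_sum fun a _ => ?_
  have h0 : 0 ≤ xi ψ a := by unfold xi; positivity
  rcases h0.eq_or_lt with h | h
  · simp [← h]
  · have := Real.log_le_log h (xi_le ψ hψ a)
    rw [one_div, Real.log_inv, Real.log_pow] at this
    rw [← mul_neg]
    exact mul_le_mul_of_nonneg_left (by linarith) h0
end

section
/- Let ψ ∈ ℂ^{2ⁿ} be a unit vector. Then H(Ξ_ψ) = n·log 2 (i.e., the stabilizer entropy M(ψ) = 0) if and only if ψ is a stabilizer state, meaning there exist signed Pauli strings g₁,…,gₙ (each gᵢ = εᵢ Pᵢ with εᵢ ∈ {+1,−1} and Pᵢ an unphased n-qubit Pauli string), pairwise commuting, independent in the sense that ∏_{i∈A} gᵢ ≠ I for every nonempty A ⊆ {1,…,n}, and satisfying gᵢ ψ = ψ for all i. -/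
/-!
Write `e(P) = ⟨ψ, P ψ⟩`, a real number with `e(P)² ≤ 1`, so that `Ξ_ψ(P) = e(P)² / 2ⁿ`.
Parseval's identity in the Pauli basis (`sum_expect_sq`) says that `Ξ_ψ` is a probability
vector, and all its entries are at most `2⁻ⁿ`. Such a vector has entropy `n log 2` exactly when
every entry is `0` or `2⁻ⁿ` (`entropy_eq_iff`), i.e. when every `e(P)²` is `0` or `1`.

By the equality case of Cauchy–Schwarz, `e(P)² = 1` means that `ψ` is an eigenvector of `P`.
Up to phases, Pauli strings multiply like the vectors of `(𝔽₂ × 𝔽₂)ⁿ`, so the labels of the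
strings having `ψ` as an eigenvector form an `𝔽₂`-subspace `stabSpace ψ`. The sum of all `e(P)²`
is `2ⁿ`, and the subspace contributes its cardinality `2 ^ dim`; hence all the other `e(P)`
vanish exactly when the dimension is `n` (`flat_iff_finrank`).

It remains to match `n`-dimensionality with the existence of stabilizer generators. A product of
signed strings is a phase times the string of the summed label, and a string is a scalar only if
its label is `0`. So independence of generators fixing `ψ` is the linear independence of their
labels in `stabSpace ψ`, in both directions; commutation is automatic, because both products
`g h` and `h g` are multiples of one string and both fix `ψ`.
-/

open Matrix

/-- The signed Pauli string `g i = ε i • P i` where `ε i ∈ {+1, -1}` is a sign and `P i`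
is an unphased Pauli string. -/
noncomputable def signedPauli {n : ℕ} (ε : Fin n → Bool) (a : Fin n → Fin n → Fin 4)
    (i : Fin n) : Matrix (Fin n → Fin 2) (Fin n → Fin 2) ℂ :=
  (if ε i then (1 : ℂ) else -1) • pauliString (a i)

/-! ### Labels of Pauli strings -/

/-- The Pauli labels `0, 1, 2, 3` (for `I, X, Y, Z`) identified with the Klein four-group
`𝔽₂ × 𝔽₂`, the two coordinates being the exponents of `X` and `Z`. -/
def pauliCode : Fin 4 ≃ ZMod 2 × ZMod 2 where
  toFun := ![(0, 0), (1, 0), (1, 1), (0, 1)]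
  invFun p := if p = (0, 0) then 0 else if p = (1, 0) then 1 else if p = (1, 1) then 2 else 3
  left_inv := by decide
  right_inv := by decide

/-- Labels of `n`-qubit Pauli strings identified with the symplectic space `(𝔽₂ × 𝔽₂)ⁿ`. -/
def stringCode (n : ℕ) : (Fin n → Fin 4) ≃ (Fin n → ZMod 2 × ZMod 2) :=
  Equiv.piCongrRight fun _ => pauliCode

/-- The unphased Pauli string with label `v` in `(𝔽₂ × 𝔽₂)ⁿ`. -/
def pauliVec {n : ℕ} (v : Fin n → ZMod 2 × ZMod 2) :
    Matrix (Fin n → Fin 2) (Fin n → Fin 2) ℂ :=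
  pauliString ((stringCode n).symm v)

lemma pauliVec_stringCode {n : ℕ} (a : Fin n → Fin 4) :
    pauliVec (stringCode n a) = pauliString a := by
  simp [pauliVec]

lemma pauliVec_apply {n : ℕ} (v : Fin n → ZMod 2 × ZMod 2) (x y : Fin n → Fin 2) :
    pauliVec v x y = ∏ i, pauliMat (pauliCode.symm (v i)) (x i) (y i) := rfl

/-! ### One-qubit identities -/

lemma pauliMat_sq_s7 (a : Fin 4) : pauliMat a * pauliMat a = 1 := by
  fin_cases a <;> ext i j <;> fin_cases i <;> fin_cases j <;>
    simp [pauliMat, Matrix.mul_apply]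

lemma pauliMat_star (a : Fin 4) (i j : Fin 2) : star (pauliMat a j i) = pauliMat a i j := by
  fin_cases a <;> fin_cases i <;> fin_cases j <;> simp [pauliMat]

lemma pauliMat_trace (a : Fin 4) (ha : a ≠ 0) : ∑ i, pauliMat a i i = 0 := by
  fin_cases a <;> simp_all [pauliMat]

lemma pauliMat_mul (p q : ZMod 2 × ZMod 2) : ∃ c : ℂ, c ≠ 0 ∧
    pauliMat (pauliCode.symm p) * pauliMat (pauliCode.symm q) =
      c • pauliMat (pauliCode.symm (p + q)) := by
  obtain ⟨a, rfl⟩ := pauliCode.surjective p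
  obtain ⟨b, rfl⟩ := pauliCode.surjective q
  have key : ∀ a b r : Fin 4, pauliCode a + pauliCode b = pauliCode r →
      ∃ c : ℂ, c ≠ 0 ∧ pauliMat a * pauliMat b = c • pauliMat r := by
    intro a b r h
    -- The phase is one of `1`, `i`, `-i`; the label equation discards the wrong `r`.
    fin_cases a <;> fin_cases b <;> fin_cases r <;> first
      | exact absurd h (by decide)
      | (refine ⟨1, one_ne_zero, ?_⟩; ext i j; fin_cases i <;> fin_cases j <;>
          simp [pauliMat, Matrix.mul_apply]; done)
      | (refine ⟨Complex.I, Complex.I_ne_zero, ?_⟩; ext i j; fin_cases i <;> fin_cases j <;>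
          simp [pauliMat, Matrix.mul_apply]; done)
      | (refine ⟨-Complex.I, neg_ne_zero.2 Complex.I_ne_zero, ?_⟩; ext i j
         fin_cases i <;> fin_cases j <;> simp [pauliMat, Matrix.mul_apply])
  simpa using key a b _ (pauliCode.apply_symm_apply _).symm

/-- The one-qubit completeness (swap) identity behind Parseval's identity for Pauli strings. -/
lemma pauliMat_swap (x y z w : Fin 2) :
    ∑ k, pauliMat k x y * pauliMat k z w = if x = w ∧ y = z then 2 else 0 := by
  rw [Fin.sum_univ_four]
  fin_cases x <;> fin_cases y <;> fin_cases z <;> fin_cases w <;>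
    simp [pauliMat] <;> norm_num

/-! ### Algebra of Pauli strings -/

lemma pauliVec_mul_apply {n : ℕ} (v w : Fin n → ZMod 2 × ZMod 2) (x y : Fin n → Fin 2) :
    (pauliVec v * pauliVec w) x y =
      ∏ i, (pauliMat (pauliCode.symm (v i)) * pauliMat (pauliCode.symm (w i))) (x i) (y i) := by
  simp only [Matrix.mul_apply, pauliVec_apply, ← Finset.prod_mul_distrib]
  rw [Finset.prod_univ_sum, Fintype.piFinset_univ]

lemma pauliVec_mul {n : ℕ} (v w : Fin n → ZMod 2 × ZMod 2) : ∃ c : ℂ, c ≠ 0 ∧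
    pauliVec v * pauliVec w = c • pauliVec (v + w) := by
  choose c hc h using fun i => pauliMat_mul (v i) (w i)
  refine ⟨∏ i, c i, Finset.prod_ne_zero_iff.2 fun i _ => hc i, ?_⟩
  ext x y
  rw [pauliVec_mul_apply, Matrix.smul_apply, pauliVec_apply, smul_eq_mul,
    ← Finset.prod_mul_distrib]
  exact Finset.prod_congr rfl fun i _ => by rw [h]; rfl

lemma prod_one_apply {n : ℕ} (x y : Fin n → Fin 2) :
    ∏ i, (1 : Matrix (Fin 2) (Fin 2) ℂ) (x i) (y i) =
      (1 : Matrix (Fin n → Fin 2) (Fin n → Fin 2) ℂ) x y := by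
  simp only [Matrix.one_apply, Finset.prod_ite_zero, funext_iff]
  simp

lemma pauliVec_sq {n : ℕ} (v : Fin n → ZMod 2 × ZMod 2) : pauliVec v * pauliVec v = 1 := by
  ext x y
  rw [pauliVec_mul_apply]
  simp only [pauliMat_sq_s7, prod_one_apply]

lemma pauliVec_zero {n : ℕ} : pauliVec (0 : Fin n → ZMod 2 × ZMod 2) = 1 := by
  ext x y
  rw [← prod_one_apply, pauliVec_apply]
  refine Finset.prod_congr rfl fun i _ => ?_
  have : pauliMat 0 = 1 := by rw [Matrix.one_fin_two]; rfl
  rw [← this]; rfl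

lemma pauliVec_conjTranspose {n : ℕ} (v : Fin n → ZMod 2 × ZMod 2) :
    (pauliVec v)ᴴ = pauliVec v := by
  ext x y
  rw [Matrix.conjTranspose_apply, pauliVec_apply, pauliVec_apply, star_prod]
  exact Finset.prod_congr rfl fun i _ => pauliMat_star _ _ _

/-- A Pauli string that is a scalar has label `0`, since all other strings are traceless. -/
lemma eq_zero_of_smul_pauliVec_eq_one {n : ℕ} (v : Fin n → ZMod 2 × ZMod 2) (c : ℂ)
    (h : c • pauliVec v = 1) : v = 0 := by
  by_contra hv
  obtain ⟨i, hi⟩ := Function.ne_iff.1 hv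
  have h0 : (pauliVec v).trace = 0 := by
    simp only [Matrix.trace, Matrix.diag_apply, pauliVec_apply]
    rw [← Fintype.piFinset_univ,
      ← Finset.prod_univ_sum (fun _ => Finset.univ)
        (fun i k => pauliMat (pauliCode.symm (v i)) k k)]
    refine Finset.prod_eq_zero (Finset.mem_univ i) (pauliMat_trace _ fun h => hi ?_)
    rw [Equiv.symm_apply_eq] at h
    exact h
  have h1 := congrArg Matrix.trace h
  rw [Matrix.trace_smul, h0, Matrix.trace_one] at h1
  rw [smul_zero] at h1
  simpa using h1.symm

/-- A product of phased Pauli strings is the phased Pauli string of the summed label. -/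
lemma listProd_pauliVec {n m : ℕ} (f : Fin m → Matrix (Fin n → Fin 2) (Fin n → Fin 2) ℂ)
    (v : Fin m → Fin n → ZMod 2 × ZMod 2) (h : ∀ i, ∃ c : ℂ, c ≠ 0 ∧ f i = c • pauliVec (v i)) :
    ∃ c : ℂ, c ≠ 0 ∧ (List.ofFn f).prod = c • pauliVec (∑ i, v i) := by
  induction m with
  | zero => exact ⟨1, one_ne_zero, by simp [pauliVec_zero]⟩
  | succ m ih =>
    obtain ⟨c, hc, hp⟩ := ih (fun i => f i.succ) (fun i => v i.succ) fun i => h i.succ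
    obtain ⟨d, hd, hf⟩ := h 0
    obtain ⟨e, he, hm⟩ := pauliVec_mul (v 0) (∑ i : Fin m, v i.succ)
    refine ⟨d * c * e, by positivity, ?_⟩
    rw [List.ofFn_succ, List.prod_cons, hp, hf, Fin.sum_univ_succ, smul_mul_smul_comm, hm,
      smul_smul]

lemma listProd_mulVec {n m : ℕ} (f : Fin m → Matrix (Fin n → Fin 2) (Fin n → Fin 2) ℂ)
    (ψ : (Fin n → Fin 2) → ℂ) (h : ∀ i, f i *ᵥ ψ = ψ) : (List.ofFn f).prod *ᵥ ψ = ψ := by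
  induction m with
  | zero => simp
  | succ m ih =>
    rw [List.ofFn_succ, List.prod_cons, ← Matrix.mulVec_mulVec, ih _ fun i => h i.succ, h 0]

/-! ### Expectation values and Parseval's identity -/

/-- The real expectation value `⟨ψ, P ψ⟩` of the Pauli string with label `v`. -/
noncomputable def expect {n : ℕ} (ψ : (Fin n → Fin 2) → ℂ) (v : Fin n → ZMod 2 × ZMod 2) : ℝ :=
  (star ψ ⬝ᵥ pauliVec v *ᵥ ψ).re

/-- The expectation value is real, Pauli strings being Hermitian. -/
lemma expect_ofReal {n : ℕ} (ψ : (Fin n → Fin 2) → ℂ) (v : Fin n → ZMod 2 × ZMod 2) :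
    (expect ψ v : ℂ) = star ψ ⬝ᵥ pauliVec v *ᵥ ψ := by
  apply Complex.conj_eq_iff_re.1
  change star (star ψ ⬝ᵥ pauliVec v *ᵥ ψ) = _
  rw [← Matrix.star_dotProduct_star, star_star, Matrix.star_mulVec, pauliVec_conjTranspose,
    Matrix.dotProduct_mulVec, dotProduct_comm]

/-- Parseval's identity in the Pauli basis. -/
lemma sum_expect_sq {n : ℕ} (ψ : (Fin n → Fin 2) → ℂ) (hψ : star ψ ⬝ᵥ ψ = 1) :
    ∑ v, expect ψ v ^ 2 = 2 ^ n := by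
  have swap : ∀ x y z w : Fin n → Fin 2, ∑ v, pauliVec v x y * pauliVec v z w =
      if x = w ∧ y = z then 2 ^ n else 0 := by
    intro x y z w
    rw [← (stringCode n).sum_comp]
    simp only [pauliVec_stringCode, pauliString, ← Finset.prod_mul_distrib]
    rw [← Fintype.piFinset_univ,
      ← Finset.prod_univ_sum (fun _ => Finset.univ)
        (fun i k => pauliMat k (x i) (y i) * pauliMat k (z i) (w i))]
    simp only [pauliMat_swap, Finset.prod_ite_zero, funext_iff, Finset.mem_univ, true_imp_iff,
      forall_and, Finset.prod_const, Finset.card_univ, Fintype.card_fin]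
  have key : ∀ v, star ψ ⬝ᵥ pauliVec v *ᵥ ψ =
      ∑ p : (Fin n → Fin 2) × (Fin n → Fin 2), star (ψ p.1) * ψ p.2 * pauliVec v p.1 p.2 := by
    intro v
    simp only [dotProduct, Matrix.mulVec, Finset.mul_sum, Pi.star_apply, Fintype.sum_prod_type]
    exact Finset.sum_congr rfl fun x _ => Finset.sum_congr rfl fun y _ => by ring
  have hn : ∑ x, star (ψ x) * ψ x = 1 := hψ
  apply Complex.ofReal_injective
  push_cast
  simp only [expect_ofReal, key]
  calc ∑ v, (∑ p : (Fin n → Fin 2) × (Fin n → Fin 2),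
          star (ψ p.1) * ψ p.2 * pauliVec v p.1 p.2) ^ 2
      = ∑ p : (Fin n → Fin 2) × (Fin n → Fin 2), ∑ q : (Fin n → Fin 2) × (Fin n → Fin 2),
          star (ψ p.1) * ψ p.2 * (star (ψ q.1) * ψ q.2) *
          ∑ v, pauliVec v p.1 p.2 * pauliVec v q.1 q.2 := by
        simp only [sq, Finset.sum_mul_sum]
        rw [Finset.sum_comm]
        refine Finset.sum_congr rfl fun p _ => ?_
        rw [Finset.sum_comm]
        refine Finset.sum_congr rfl fun q _ => ?_
        rw [Finset.mul_sum]
        exact Finset.sum_congr rfl fun v _ => by ring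
    _ = ∑ p : (Fin n → Fin 2) × (Fin n → Fin 2),
          star (ψ p.1) * ψ p.2 * (star (ψ p.2) * ψ p.1) * 2 ^ n := by
        refine Finset.sum_congr rfl fun p _ => ?_
        rw [Finset.sum_eq_single p.swap]
        · simp [swap]
        · intro q _ hq
          rw [swap, if_neg, mul_zero]
          rintro ⟨h1, h2⟩
          exact hq (Prod.ext h2.symm h1.symm)
        · simp
    _ = 2 ^ n * ((∑ x, star (ψ x) * ψ x) * ∑ y, star (ψ y) * ψ y) := by
        rw [Finset.sum_mul_sum, Finset.mul_sum, Fintype.sum_prod_type]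
        refine Finset.sum_congr rfl fun x _ => ?_
        rw [Finset.mul_sum]
        exact Finset.sum_congr rfl fun y _ => by ring
    _ = 2 ^ n := by rw [hn]; ring

/-- An eigenvalue of a Pauli string at the unit vector `ψ` is the expectation value, and it is
`±1` because the string squares to `1`. -/
lemma smul_expect {n : ℕ} (ψ : (Fin n → Fin 2) → ℂ) (hψ : star ψ ⬝ᵥ ψ = 1)
    (v : Fin n → ZMod 2 × ZMod 2) (c : ℂ) (h : pauliVec v *ᵥ ψ = c • ψ) :
    c = expect ψ v ∧ expect ψ v ^ 2 = 1 := by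
  have hc : c = expect ψ v := by
    rw [expect_ofReal, h, dotProduct_smul, hψ, smul_eq_mul, mul_one]
  refine ⟨hc, ?_⟩
  have h2 : c • c • ψ = ψ := by
    rw [← h, ← Matrix.mulVec_smul, ← h, Matrix.mulVec_mulVec, pauliVec_sq, Matrix.one_mulVec]
  have h3 := congrArg (star ψ ⬝ᵥ ·) h2
  simp only [dotProduct_smul, hψ, smul_eq_mul, mul_one] at h3
  rw [hc] at h3
  rw [sq]
  exact_mod_cast h3

/-- The variance of a Pauli string in the state `ψ`, as the squared norm of `Pψ - ⟨P⟩ψ`. -/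
lemma variance_eq {n : ℕ} (ψ : (Fin n → Fin 2) → ℂ) (hψ : star ψ ⬝ᵥ ψ = 1)
    (v : Fin n → ZMod 2 × ZMod 2) :
    star (pauliVec v *ᵥ ψ - (expect ψ v : ℂ) • ψ) ⬝ᵥ
      (pauliVec v *ᵥ ψ - (expect ψ v : ℂ) • ψ) = ((1 - expect ψ v ^ 2 : ℝ) : ℂ) := by
  have h1 : star (pauliVec v *ᵥ ψ) ⬝ᵥ (pauliVec v *ᵥ ψ) = 1 := by
    rw [Matrix.star_mulVec, pauliVec_conjTranspose, ← Matrix.dotProduct_mulVec,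
      Matrix.mulVec_mulVec, pauliVec_sq, Matrix.one_mulVec, hψ]
  have h2 : star (pauliVec v *ᵥ ψ) ⬝ᵥ ψ = expect ψ v := by
    rw [Matrix.star_mulVec, pauliVec_conjTranspose, ← Matrix.dotProduct_mulVec, expect_ofReal]
  simp only [star_sub, star_smul, sub_dotProduct, dotProduct_sub, smul_dotProduct,
    dotProduct_smul, h1, h2, hψ, ← expect_ofReal]
  simp
  ring

lemma expect_sq_le_one {n : ℕ} (ψ : (Fin n → Fin 2) → ℂ) (hψ : star ψ ⬝ᵥ ψ = 1)
    (v : Fin n → ZMod 2 × ZMod 2) : expect ψ v ^ 2 ≤ 1 := by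
  open ComplexOrder in
  have h := dotProduct_star_self_nonneg (pauliVec v *ᵥ ψ - (expect ψ v : ℂ) • ψ)
  rw [variance_eq ψ hψ, Complex.zero_le_real] at h
  linarith

/-- The equality case of Cauchy–Schwarz: a string of vanishing variance has `ψ` as an
eigenvector. -/
lemma mulVec_eq_of_expect_sq {n : ℕ} (ψ : (Fin n → Fin 2) → ℂ) (hψ : star ψ ⬝ᵥ ψ = 1)
    (v : Fin n → ZMod 2 × ZMod 2) (h : expect ψ v ^ 2 = 1) :
    pauliVec v *ᵥ ψ = (expect ψ v : ℂ) • ψ := by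
  have h1 := variance_eq ψ hψ v
  rw [h, sub_self, Complex.ofReal_zero] at h1
  open ComplexOrder in
  exact sub_eq_zero.1 (dotProduct_star_self_eq_zero.1 h1)

/-! ### The stabilizer space -/

/-- The labels of the Pauli strings having `ψ` as an eigenvector, as an `𝔽₂`-subspace:
the image in `(𝔽₂ × 𝔽₂)ⁿ` of the stabilizer group of `ψ`. -/
def stabSpace {n : ℕ} (ψ : (Fin n → Fin 2) → ℂ) :
    Submodule (ZMod 2) (Fin n → ZMod 2 × ZMod 2) where
  carrier := {v | ∃ c : ℂ, pauliVec v *ᵥ ψ = c • ψ}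
  zero_mem' := ⟨1, by rw [pauliVec_zero, Matrix.one_mulVec, one_smul]⟩
  add_mem' := by
    rintro v w ⟨c, hv⟩ ⟨d, hw⟩
    obtain ⟨e, he, hm⟩ := pauliVec_mul v w
    refine ⟨e⁻¹ * (d * c), ?_⟩
    rw [← inv_smul_smul₀ he (pauliVec (v + w)), ← hm, Matrix.smul_mulVec,
      ← Matrix.mulVec_mulVec, hw, Matrix.mulVec_smul, hv, smul_smul, smul_smul, mul_assoc]
  smul_mem' := by
    intro k v hv
    have hk : k = 0 ∨ k = 1 := by revert k; decide
    rcases hk with rfl | rfl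
    · rw [zero_smul]
      exact ⟨1, by rw [pauliVec_zero, Matrix.one_mulVec, one_smul]⟩
    · rwa [one_smul]

lemma mem_stabSpace_iff {n : ℕ} (ψ : (Fin n → Fin 2) → ℂ) (hψ : star ψ ⬝ᵥ ψ = 1)
    (v : Fin n → ZMod 2 × ZMod 2) : v ∈ stabSpace ψ ↔ expect ψ v ^ 2 = 1 :=
  ⟨fun ⟨c, hc⟩ => (smul_expect ψ hψ v c hc).2,
    fun h => ⟨_, mulVec_eq_of_expect_sq ψ hψ v h⟩⟩

/-- The expectation values are all `0` or `±1` exactly when the stabilizer space has the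
maximal dimension `n`: by Parseval the squares sum to `2 ^ n`, of which the stabilizer space
contributes its cardinality. -/
lemma flat_iff_finrank {n : ℕ} (ψ : (Fin n → Fin 2) → ℂ) (hψ : star ψ ⬝ᵥ ψ = 1) :
    (∀ v, expect ψ v ^ 2 = 0 ∨ expect ψ v ^ 2 = 1) ↔
      n ≤ Module.finrank (ZMod 2) (stabSpace ψ) := by
  classical
  set S : Finset (Fin n → ZMod 2 × ZMod 2) := Finset.univ.filter (· ∈ stabSpace ψ) with hS
  have hcard : S.card = 2 ^ Module.finrank (ZMod 2) (stabSpace ψ) := by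
    have h := Module.card_eq_pow_finrank (K := ZMod 2) (V := stabSpace ψ)
    rw [Fintype.card_subtype, ZMod.card] at h
    exact h
  have hsumS : ∑ v ∈ S, expect ψ v ^ 2 = 2 ^ Module.finrank (ZMod 2) (stabSpace ψ) := by
    rw [Finset.sum_congr rfl fun v hv =>
      (mem_stabSpace_iff ψ hψ v).1 (Finset.mem_filter.1 hv).2]
    rw [Finset.sum_const, hcard, nsmul_eq_mul, mul_one, Nat.cast_pow, Nat.cast_ofNat]
  have htot := sum_expect_sq ψ hψ
  rw [← Finset.sum_add_sum_compl S, hsumS] at htot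
  constructor
  · intro h
    have h0 : ∑ v ∈ Sᶜ, expect ψ v ^ 2 = 0 := by
      refine Finset.sum_eq_zero fun v hv => (h v).resolve_right fun h1 => ?_
      rw [Finset.mem_compl] at hv
      exact hv (Finset.mem_filter.2 ⟨Finset.mem_univ _, (mem_stabSpace_iff ψ hψ v).2 h1⟩)
    rw [h0, add_zero] at htot
    exact (pow_right_injective₀ (a := (2 : ℝ)) (by norm_num) (by norm_num) htot).ge
  · intro h v
    have hpow : (2 : ℝ) ^ n ≤ 2 ^ Module.finrank (ZMod 2) (stabSpace ψ) :=
      pow_le_pow_right₀ (by norm_num) h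
    have hnn : ∀ v ∈ Sᶜ, 0 ≤ expect ψ v ^ 2 := fun v _ => sq_nonneg _
    have h0 := (Finset.sum_eq_zero_iff_of_nonneg hnn).1
      (le_antisymm (by linarith) (Finset.sum_nonneg hnn))
    by_cases hv : v ∈ S
    · exact .inr ((mem_stabSpace_iff ψ hψ v).1 (Finset.mem_filter.1 hv).2)
    · exact .inl (h0 v (Finset.mem_compl.2 hv))

/-! ### Entropy -/

/-- A probability vector bounded by `1 / N` has entropy `log N` exactly when its entries are
`0` or `1 / N`. -/
lemma entropy_eq_iff {ι : Type*} [Fintype ι] (q : ι → ℝ) (N : ℝ) (hN : 0 < N)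
    (h0 : ∀ i, 0 ≤ q i) (h1 : ∀ i, q i ≤ 1 / N) (hs : ∑ i, q i = 1) :
    -∑ i, q i * Real.log (q i) = Real.log N ↔ ∀ i, q i = 0 ∨ q i = 1 / N := by
  have hterm : ∀ i, q i ≠ 0 → Real.log (N * q i) = Real.log N + Real.log (q i) :=
    fun i hi => Real.log_mul hN.ne' hi
  have hsum : ∑ i, q i * Real.log (N * q i) = Real.log N + ∑ i, q i * Real.log (q i) := by
    have : ∀ i, q i * Real.log (N * q i) = q i * Real.log N + q i * Real.log (q i) := by
      intro i
      by_cases hi : q i = 0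
      · simp [hi]
      · rw [hterm i hi, mul_add]
    simp only [this, Finset.sum_add_distrib, ← Finset.sum_mul, hs, one_mul]
  have hle : ∀ i, N * q i ≤ 1 := fun i => by
    have := mul_le_mul_of_nonneg_left (h1 i) hN.le
    rwa [mul_one_div_cancel hN.ne'] at this
  have hnp : ∀ i ∈ Finset.univ, q i * Real.log (N * q i) ≤ 0 := fun i _ =>
    mul_nonpos_of_nonneg_of_nonpos (h0 i)
      (Real.log_nonpos (mul_nonneg hN.le (h0 i)) (hle i))
  -- `log N - H(q) = ∑ q log (N q)`, whose terms are all nonpositive.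
  have hiff : -∑ i, q i * Real.log (q i) = Real.log N ↔
      ∑ i, q i * Real.log (N * q i) = 0 := by
    rw [hsum]
    constructor <;> intro h <;> linarith
  rw [hiff, Finset.sum_eq_zero_iff_of_nonpos hnp]
  refine ⟨fun h i => ?_, fun h i _ => ?_⟩
  · rcases mul_eq_zero.1 (h i (Finset.mem_univ i)) with h | h
    · exact .inl h
    · have := mul_nonneg hN.le (h0 i)
      rcases Real.log_eq_zero.1 h with h | h | h
      · exact .inl ((mul_eq_zero.1 h).resolve_left hN.ne')
      · exact .inr (eq_one_div_of_mul_eq_one_right h)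
      · linarith
  · rcases h i with h | h
    · simp [h]
    · rw [h, mul_one_div_cancel hN.ne', Real.log_one, mul_zero]

lemma entropy_iff_flat {n : ℕ} (ψ : (Fin n → Fin 2) → ℂ) (hψ : star ψ ⬝ᵥ ψ = 1) :
    (-∑ a : Fin n → Fin 4, xi ψ a * Real.log (xi ψ a)) = (n : ℝ) * Real.log 2 ↔
      ∀ v, expect ψ v ^ 2 = 0 ∨ expect ψ v ^ 2 = 1 := by
  have hN : (0 : ℝ) < 2 ^ n := by positivity
  have hxi : ∀ a, xi ψ a = expect ψ (stringCode n a) ^ 2 / 2 ^ n := fun a => by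
    rw [xi, expect, pauliVec_stringCode]
  rw [← Real.log_pow, entropy_eq_iff (xi ψ) (2 ^ n) hN, ← (stringCode n).forall_congr_right]
  · refine forall_congr' fun a => ?_
    rw [hxi, div_eq_zero_iff, div_left_inj' hN.ne']
    simp only [hN.ne', or_false]
  · exact fun a => by rw [hxi]; positivity
  · intro a
    rw [hxi]
    exact div_le_div_of_nonneg_right (expect_sq_le_one ψ hψ _) hN.le
  · simp only [hxi, ← Finset.sum_div]
    rw [(stringCode n).sum_comp fun v => expect ψ v ^ 2, sum_expect_sq ψ hψ, div_self hN.ne']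

/-! ### Stabilizer generators -/

/-- Turns a family of `±` Pauli strings, restricted to a subset `A`, into one Pauli string
whose label is the sum over `A`. -/
lemma subset_prod {n : ℕ} (ε : Fin n → Bool) (a : Fin n → Fin n → Fin 4) (A : Finset (Fin n)) :
    ∃ c : ℂ, c ≠ 0 ∧ (List.ofFn (fun i => if i ∈ A then signedPauli ε a i else 1)).prod =
      c • pauliVec (∑ i ∈ A, stringCode n (a i)) := by
  have h := listProd_pauliVec (fun i => if i ∈ A then signedPauli ε a i else 1)
    (fun i => if i ∈ A then stringCode n (a i) else 0) fun i => by
      by_cases hi : i ∈ A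
      · refine ⟨if ε i then 1 else -1, by split_ifs <;> simp, ?_⟩
        simp only [hi, if_true, signedPauli, pauliVec_stringCode]
      · exact ⟨1, one_ne_zero, by simp [hi, pauliVec_zero]⟩
  simpa only [Finset.sum_ite_mem, Finset.univ_inter] using h

lemma sum_eq_sum_filter_ne_zero {m : ℕ} {V : Type*} [AddCommGroup V] [Module (ZMod 2) V]
    (g : Fin m → ZMod 2) (v : Fin m → V) :
    ∑ i, g i • v i = ∑ i ∈ Finset.univ.filter (fun i => g i ≠ 0), v i := by
  rw [Finset.sum_filter]
  refine Finset.sum_congr rfl fun i _ => ?_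
  have hk : ∀ k : ZMod 2, k = 0 ∨ k = 1 := by decide
  rcases hk (g i) with h | h <;> simp [h]

lemma le_finrank_of_stabilizer {n : ℕ} (ψ : (Fin n → Fin 2) → ℂ) (hψ : star ψ ⬝ᵥ ψ = 1)
    (ε : Fin n → Bool) (a : Fin n → Fin n → Fin 4)
    (hind : ∀ A : Finset (Fin n), A.Nonempty →
      (List.ofFn (fun i => if i ∈ A then signedPauli ε a i else 1)).prod ≠ 1)
    (hfix : ∀ i, (signedPauli ε a i).mulVec ψ = ψ) :
    n ≤ Module.finrank (ZMod 2) (stabSpace ψ) := by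
  have hmem : ∀ i, stringCode n (a i) ∈ stabSpace ψ := fun i => by
    refine ⟨if ε i then 1 else -1, ?_⟩
    have h := hfix i
    rw [signedPauli, Matrix.smul_mulVec] at h
    rw [pauliVec_stringCode]
    split_ifs at h ⊢
    · simpa using h
    · rw [neg_one_smul] at h ⊢
      rw [← h, neg_neg, h]
  have hli : LinearIndependent (ZMod 2)
      (fun i => (⟨stringCode n (a i), hmem i⟩ : stabSpace ψ)) := by
    rw [Fintype.linearIndependent_iff]
    intro g hg i
    by_contra hi
    have hg' := congrArg Subtype.val hg
    rw [sum_eq_sum_filter_ne_zero] at hg'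
    set A := Finset.univ.filter (fun i => g i ≠ 0)
    have hsum : ∑ i ∈ A, stringCode n (a i) = 0 := by simpa using hg'
    refine hind A ⟨i, by simp [A, hi]⟩ ?_
    obtain ⟨c, -, hc⟩ := subset_prod ε a A
    rw [hsum, pauliVec_zero] at hc
    have hp := listProd_mulVec (fun i => if i ∈ A then signedPauli ε a i else 1) ψ fun i => by
      split_ifs
      · exact hfix i
      · exact Matrix.one_mulVec ψ
    -- The product is the scalar `c`, and it fixes the unit vector `ψ`, so `c = 1`.
    rw [hc, Matrix.smul_mulVec, Matrix.one_mulVec] at hp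
    have h1 := congrArg (star ψ ⬝ᵥ ·) hp
    simp only [dotProduct_smul, hψ, smul_eq_mul, mul_one] at h1
    rw [hc, h1, one_smul]
  simpa using hli.fintype_card_le_finrank

/-- A basis of the stabilizer space gives independent generators; two of them commute because
they commute or anticommute, and they act on `ψ` by nonzero scalars. -/
lemma stabilizer_of_le_finrank {n : ℕ} (ψ : (Fin n → Fin 2) → ℂ) (hψ : star ψ ⬝ᵥ ψ = 1)
    (h : n ≤ Module.finrank (ZMod 2) (stabSpace ψ)) :
    ∃ (ε : Fin n → Bool) (a : Fin n → Fin n → Fin 4),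
      (∀ i j, signedPauli ε a i * signedPauli ε a j =
        signedPauli ε a j * signedPauli ε a i) ∧
      (∀ A : Finset (Fin n), A.Nonempty →
        (List.ofFn (fun i => if i ∈ A then signedPauli ε a i else 1)).prod ≠ 1) ∧
      (∀ i, (signedPauli ε a i).mulVec ψ = ψ) := by
  classical
  obtain ⟨b, hb⟩ := exists_linearIndependent_of_le_finrank h
  set v : Fin n → Fin n → ZMod 2 × ZMod 2 := fun i => b i with hv
  set ε : Fin n → Bool := fun i => decide (expect ψ (v i) = 1) with hε
  set a : Fin n → Fin n → Fin 4 := fun i => (stringCode n).symm (v i) with ha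
  have hsp : ∀ i, signedPauli ε a i = (if ε i then (1 : ℂ) else -1) • pauliVec (v i) :=
    fun i => rfl
  have hfix : ∀ i, (signedPauli ε a i).mulVec ψ = ψ := by
    intro i
    have hsq := (mem_stabSpace_iff ψ hψ (v i)).1 (b i).2
    rw [hsp, Matrix.smul_mulVec, mulVec_eq_of_expect_sq ψ hψ _ hsq]
    by_cases h1 : expect ψ (v i) = 1
    · simp [hε, h1]
    · have h2 := (eq_or_eq_neg_of_sq_eq_sq _ _ (hsq.trans (one_pow 2).symm)).resolve_left h1
      simp [hε, h2]
      norm_num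
  refine ⟨ε, a, fun i j => ?_, fun A hA hprod => ?_, hfix⟩
  · obtain ⟨c, hc, hcm⟩ := pauliVec_mul (v i) (v j)
    obtain ⟨d, hd, hdm⟩ := pauliVec_mul (v j) (v i)
    have hij : signedPauli ε a i * signedPauli ε a j =
        ((if ε i then 1 else -1) * (if ε j then 1 else -1) * c) • pauliVec (v i + v j) := by
      rw [hsp, hsp, smul_mul_smul_comm, hcm, smul_smul]
    have hji : signedPauli ε a j * signedPauli ε a i =
        ((if ε j then 1 else -1) * (if ε i then 1 else -1) * d) • pauliVec (v i + v j) := by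
      rw [hsp, hsp, smul_mul_smul_comm, hdm, smul_smul, add_comm (v j)]
    -- Both products are multiples of one Pauli string and fix `ψ`, so the scalars agree.
    have h1 : (signedPauli ε a i * signedPauli ε a j) *ᵥ ψ = ψ := by
      rw [← Matrix.mulVec_mulVec, hfix, hfix]
    have h2 : (signedPauli ε a j * signedPauli ε a i) *ᵥ ψ = ψ := by
      rw [← Matrix.mulVec_mulVec, hfix, hfix]
    have h12 := h1.trans h2.symm
    rw [hij, Matrix.smul_mulVec] at h1
    rw [hij, hji, Matrix.smul_mulVec, Matrix.smul_mulVec] at h12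
    have hne : pauliVec (v i + v j) *ᵥ ψ ≠ 0 := by
      intro h0
      rw [h0, smul_zero] at h1
      rw [← h1] at hψ
      simp at hψ
    rw [hij, hji, smul_left_injective ℂ hne h12]
  · obtain ⟨c, -, hc⟩ := subset_prod ε a A
    have h0 := eq_zero_of_smul_pauliVec_eq_one _ c (hc.symm.trans hprod)
    have h0' : ∑ i ∈ A, b i = 0 := by
      apply Subtype.ext
      simpa [ha, hv] using h0
    obtain ⟨i, hi⟩ := hA
    have := linearIndependent_iff'.1 hb A (fun _ => 1) (by simpa using h0') i hi
    exact one_ne_zero this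

/-! ### The equivalence -/

/-- For a unit vector `ψ ∈ ℂ^{2^n}`, the Shannon entropy of `Ξ_ψ` equals `n log 2`
(equivalently the stabilizer entropy `M(ψ)` vanishes) if and only if `ψ` is a stabilizer
state: there exist pairwise commuting signed Pauli strings `g 1, …, g n`, independent in
the sense that `∏ i in A, g i ≠ 1` for every nonempty `A`, with `g i ψ = ψ` for all `i`. -/
theorem stmt7 {n : ℕ} (ψ : (Fin n → Fin 2) → ℂ) (hψ : star ψ ⬝ᵥ ψ = 1) :
    (-∑ a : Fin n → Fin 4, xi ψ a * Real.log (xi ψ a)) = (n : ℝ) * Real.log 2 ↔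
      ∃ (ε : Fin n → Bool) (a : Fin n → Fin n → Fin 4),
        (∀ i j, signedPauli ε a i * signedPauli ε a j =
          signedPauli ε a j * signedPauli ε a i) ∧
        (∀ A : Finset (Fin n), A.Nonempty →
          (List.ofFn (fun i => if i ∈ A then signedPauli ε a i else 1)).prod ≠ 1) ∧
        (∀ i, (signedPauli ε a i).mulVec ψ = ψ) := by
  rw [entropy_iff_flat ψ hψ, flat_iff_finrank ψ hψ]
  exact ⟨stabilizer_of_le_finrank ψ hψ, fun ⟨ε, a, _, hind, hfix⟩ =>
    le_finrank_of_stabilizer ψ hψ ε a hind hfix⟩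
end
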